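/- Let d ≥ 1, let G : ℝ^d → ℝ be Lipschitz continuous with Lipschitz constant K_G ≥ 0 (with respect to the Euclidean norm), fix t > 0, x, y ∈ ℝ^d and δ > 0. Let X : [0,t] → ℝ^d be a continuous path such that for every r ∈ [0,t] and every coordinate k ∈ {1,…,d}, |X(r)_k − ((1 − r/t)·x_k + (r/t)·y_k)| ≤ δ. Then |∫_0^t G(X(r)) dr − t·∫_0^1 G((1−r)·x + r·y) dr| ≤ √d · δ · K_G · t. -/

import Mathlib

open MeasureTheory

/-- Lemma 2 of the paper: if a continuous path `X` stays, coordinatewise, within `δ` of the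
line segment interpolating `x` and `y` on `[0,t]`, then the time average of a Lipschitz
function `G` along the path is within `√d·δ·K_G·t` of its average along the segment. -/
theorem stmt_0 {d : ℕ} (hd : 1 ≤ d)
    (G : EuclideanSpace ℝ (Fin d) → ℝ) (K : ℝ) (hK : 0 ≤ K)
    (hG : ∀ a b : EuclideanSpace ℝ (Fin d), |G a - G b| ≤ K * ‖a - b‖)
    (t : ℝ) (ht : 0 < t) (x y : EuclideanSpace ℝ (Fin d)) (δ : ℝ) (hδ : 0 < δ)
    (X : ℝ → EuclideanSpace ℝ (Fin d)) (hXc : ContinuousOn X (Set.Icc 0 t))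
    (hX : ∀ r ∈ Set.Icc (0 : ℝ) t, ∀ k : Fin d,
      |X r k - ((1 - r / t) * x k + (r / t) * y k)| ≤ δ) :
    |(∫ r in (0 : ℝ)..t, G (X r)) - t * ∫ r in (0 : ℝ)..1, G ((1 - r) • x + r • y)| ≤
      Real.sqrt d * δ * K * t := by
  have hGc : Continuous G := by
    have : LipschitzWith K.toNNReal G := by
      apply LipschitzWith.of_dist_le_mul
      intro a b
      rw [Real.dist_eq, dist_eq_norm, Real.coe_toNNReal K hK]
      exact hG a b
    exact this.continuous
  have hsub : t * ∫ r in (0 : ℝ)..1, G ((1 - r) • x + r • y)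
      = ∫ r in (0 : ℝ)..t, G ((1 - r / t) • x + (r / t) • y) := by
    have h := intervalIntegral.integral_comp_div (a := 0) (b := t)
      (fun r : ℝ => G ((1 - r) • x + r • y)) ht.ne'
    rw [h, zero_div, div_self ht.ne', smul_eq_mul]
  have hi1 : IntervalIntegrable (fun r => G (X r)) volume 0 t := by
    apply ContinuousOn.intervalIntegrable
    rw [Set.uIcc_of_le ht.le]
    exact hGc.comp_continuousOn hXc
  have hi2 : IntervalIntegrable (fun r => G ((1 - r / t) • x + (r / t) • y)) volume 0 t := by
    apply Continuous.intervalIntegrable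
    fun_prop
  rw [hsub, ← intervalIntegral.integral_sub hi1 hi2]
  have key : ∀ r ∈ Set.uIoc (0 : ℝ) t,
      ‖G (X r) - G ((1 - r / t) • x + (r / t) • y)‖ ≤ Real.sqrt d * δ * K := by
    intro r hr
    rw [Set.uIoc_of_le ht.le] at hr
    have hr' : r ∈ Set.Icc (0 : ℝ) t := ⟨hr.1.le, hr.2⟩
    have hn : ‖X r - ((1 - r / t) • x + (r / t) • y)‖ ≤ Real.sqrt d * δ := by
      rw [EuclideanSpace.norm_eq]
      have h1 : ∑ k : Fin d, ‖(X r - ((1 - r / t) • x + (r / t) • y)) k‖ ^ 2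
          ≤ ∑ _k : Fin d, δ ^ 2 := by
        apply Finset.sum_le_sum
        intro k _
        apply pow_le_pow_left₀ (norm_nonneg _)
        simpa using hX r hr' k
      refine (Real.sqrt_le_sqrt h1).trans ?_
      simp [Real.sqrt_sq hδ.le]
    rw [Real.norm_eq_abs]
    refine (hG _ _).trans ?_
    rw [mul_comm]
    exact mul_le_mul_of_nonneg_right hn hK
  have := intervalIntegral.norm_integral_le_of_norm_le_const key
  rwa [Real.norm_eq_abs, sub_zero, abs_of_pos ht] at this
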